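/- Let $G$ be a group and let $a, b \in G$ satisfy the braid relation $aba = bab$. Then $(ab)^3 a^{-4} = (a^{-1} b a)(a b a^{-1})$. -/

import Mathlib

theorem phi_zero_factorization (G : Type*) [Group G] (a b : G)
    (h : a * b * a = b * a * b) :
    (a * b) ^ 3 * a ^ (-4 : ℤ) = (a⁻¹ * b * a) * (a * b * a⁻¹) := by
  -- The claim with the inverses cleared: multiply by `a` on the left and `a ^ 4` on the right.
  have key : a * (a * b) ^ 3 = b * a * a * b * a ^ 3 := by
    calc a * (a * b) ^ 3 = a * (a * b * a) * (b * a * b) := by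
          simp only [pow_succ, pow_zero, one_mul, mul_assoc]
      _ = a * (b * a * b) * (a * b * a) := by rw [h]
      _ = (a * b * a) * (b * a * b) * a := by simp only [mul_assoc]
      _ = (b * a * b) * (a * b * a) * a := by rw [h]
      _ = b * a * (b * a * b) * a * a := by simp only [mul_assoc]
      _ = b * a * (a * b * a) * a * a := by rw [h]
      _ = b * a * a * b * a ^ 3 := by
          simp only [pow_succ, pow_zero, one_mul, mul_assoc]
  calc (a * b) ^ 3 * a ^ (-4 : ℤ) = a⁻¹ * (a * (a * b) ^ 3) * a ^ (-4 : ℤ) := by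
        rw [inv_mul_cancel_left]
    _ = (a⁻¹ * b * a) * (a * b * a⁻¹) := by
        rw [key]
        group
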